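/- Let B be a unital algebra and G_B^I = {f ∈ Mult[[B]] : f_0 = 0, f_1 ∈ GL(B), f_1(1) invertible, and f_n(x_1, x_2, …, x_n) = x_1 f_n(1, x_2, …, x_n) for all n ≥ 1}. Then G_B^I is a group under composition ∘ of multilinear function series. In particular if f = I·F and g = I·G with F, G having invertible constant term, then f ∘ g = I·(G · (F ∘ (I·G))) and f^{∘−1} = I · (F ∘ f^{∘−1})^{−1}. -/

import Mathlib

universe u

/-- A (formal) series of `n`-ary functions on `B` (the carrier of `Mult[[B]]`). -/
def MSeries (B : Type u) : Type u := ∀ n : ℕ, (Fin n → B) → B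

namespace MSeries

variable {B : Type u} [Ring B]

/-- The multiplication `(f · g)_n(x₁,…,xₙ) = ∑ₖ f_k(x₁,…,x_k) g_{n-k}(x_{k+1},…,xₙ)`. -/
def mul (f g : MSeries B) : MSeries B := fun n x =>
  ∑ k : Fin (n + 1),
    f k.1 (fun i => x (Fin.castLE (Nat.lt_succ_iff.mp k.isLt) i)) *
      g (n - k.1) (fun i => x ⟨k.1 + i.1, by have h1 := k.isLt; have h2 := i.isLt; omega⟩)

/-- The composition `(f ∘ g)_n(x₁,…,xₙ)
  = ∑_{n = k₁ + ⋯ + k_l, kᵢ ≥ 1} f_l(g_{k₁}(x₁,…), …, g_{k_l}(…,xₙ))`. -/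
def comp (f g : MSeries B) : MSeries B := fun n x =>
  ∑ c : Composition n,
    f c.length (fun i => g (c.blocksFun i) (fun j => x (c.embedding i j)))

/-- The compositional identity `I = (δ_{n,1} Id)`. -/
def idS : MSeries B := fun n =>
  match n with
  | 1 => fun x => x 0
  | _ => fun _ => 0

/-- The multiplicative unit `1 = (δ_{n,0} 1)`. -/
def oneS : MSeries B := fun n _ => if n = 0 then 1 else 0

end MSeries

/-- `f` is a series of `K`-multilinear functions, i.e. `f ∈ Mult[[B]]`. -/
def IsMultSeries (K : Type u) [Field K] {B : Type u} [Ring B] [Algebra K B]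
    (f : MSeries B) : Prop :=
  ∀ n, ∃ F : MultilinearMap K (fun _ : Fin n => B) B, ∀ x, f n x = F x

/-- Membership in `G_B^I = I · G_B^{inv}`: `f₀ = 0`, `f₁ ∈ GL(B)`, `f₁(1) ∈ B^×` and
`f_n(x₁, x₂, …, xₙ) = x₁ · f_n(1, x₂, …, xₙ)` for all `n ≥ 1`. -/
def memGI (K : Type u) [Field K] {B : Type u} [Ring B] [Algebra K B]
    (f : MSeries B) : Prop :=
  IsMultSeries K f ∧
  (∀ x : Fin 0 → B, f 0 x = 0) ∧
  Function.Bijective (fun b : B => f 1 fun _ => b) ∧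
  IsUnit (f 1 fun _ => 1) ∧
  ∀ (n : ℕ) (x : Fin (n + 1) → B), f (n + 1) x = x 0 * f (n + 1) (Function.update x 0 1)

/-
A series is determined by its values on lists of arguments: a product sums over all ways to cut the
list in two, a composition over all ways to cut it into consecutive nonempty blocks. Cutting the
list of blocks in two is the same as cutting the list in two and then each part into blocks, so
composition is right-distributive; cutting the list of blocks into blocks gives associativity.

For `f = I·F` and `h = I·E`, right-distributivity gives `f ∘ h = I·(E·(F ∘ h))`, so inverting `f`
means solving `(F ∘ (I·E))·E = 1`. The degree `n` part of `F ∘ (I·E)` involves only the `E_k` with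
`k < n` and its constant term `F_0` is invertible, so the equation determines `E` degree by degree.
Every element then has a right inverse in `G_B^I`, so right inverses are two-sided.
-/

section ListSums

variable {α β M N : Type*} [AddCommMonoid M] [AddCommMonoid N]

/-- The sum of `P u v` over all ways to cut `l = u ++ v`. -/
def cutSum : (List α → List α → M) → List α → M
  | P, [] => P [] []
  | P, a :: l => P [] (a :: l) + cutSum (fun u v => P (a :: u) v) l

theorem cutSum_eq_sum_range (P : List α → List α → M) (l : List α) :
    cutSum P l = ∑ k ∈ Finset.range (l.length + 1), P (l.take k) (l.drop k) := by
  induction l generalizing P with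
  | nil => simp [cutSum]
  | cons a l ih =>
    rw [cutSum, ih, List.length_cons, Finset.sum_range_succ' _ (l.length + 1), add_comm]
    simp

theorem cutSum_congr {P Q : List α → List α → M} {l : List α}
    (h : ∀ u v, u ++ v = l → P u v = Q u v) : cutSum P l = cutSum Q l := by
  simp only [cutSum_eq_sum_range, h _ _ (List.take_append_drop _ l)]

theorem cutSum_add (P Q : List α → List α → M) (l : List α) :
    cutSum (fun u v => P u v + Q u v) l = cutSum P l + cutSum Q l := by
  simp only [cutSum_eq_sum_range, Finset.sum_add_distrib]

theorem cutSum_zero (l : List α) : cutSum (fun _ _ => (0 : M)) l = 0 := by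
  simp only [cutSum_eq_sum_range, Finset.sum_const_zero]

theorem cutSum_map (g : α → β) (P : List β → List β → M) (l : List α) :
    cutSum P (l.map g) = cutSum (fun u v => P (u.map g) (v.map g)) l := by
  simp only [cutSum_eq_sum_range, List.length_map, List.map_take, List.map_drop]

theorem cutSum_eq_left {P : List α → List α → M} (h : ∀ u a v, P u (a :: v) = 0) (l : List α) :
    cutSum P l = P l [] := by
  induction l generalizing P with
  | nil => rfl
  | cons a l ih => rw [cutSum, h, zero_add, ih fun u => h (a :: u)]

theorem cutSum_eq_right {P : List α → List α → M} (h : ∀ a u v, P (a :: u) v = 0) (l : List α) :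
    cutSum P l = P [] l := by
  cases l with
  | nil => rfl
  | cons a l => simp only [cutSum, h, cutSum_zero, add_zero]

theorem cutSum_mul {R : Type*} [NonUnitalNonAssocSemiring R] (P : List α → List α → R)
    (l : List α) (b : R) : cutSum P l * b = cutSum (fun u v => P u v * b) l := by
  simp only [cutSum_eq_sum_range, Finset.sum_mul]

theorem mul_cutSum {R : Type*} [NonUnitalNonAssocSemiring R] (b : R)
    (P : List α → List α → R) (l : List α) : b * cutSum P l = cutSum (fun u v => b * P u v) l := by
  simp only [cutSum_eq_sum_range, Finset.mul_sum]

theorem cutSum_cutSum (T : List α → List α → List α → M) (l : List α) :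
    cutSum (fun u v => cutSum (T u) v) l =
      cutSum (fun u v => cutSum (fun s t => T s t v) u) l := by
  induction l generalizing T with
  | nil => rfl
  | cons a l ih => simp only [cutSum, ih, cutSum_add, add_assoc]

/-- Prepend a block of size `k + 1` to a composition of `n - k`. -/
def consBlock {n : ℕ} (k : Fin (n + 1)) (c : Composition (n - k)) : Composition (n + 1) :=
  ((Composition.single (k + 1) k.1.succ_pos).append c).cast (by omega)

theorem blocks_consBlock {n : ℕ} (k : Fin (n + 1)) (c : Composition (n - k)) :
    (consBlock k c).blocks = (k.1 + 1) :: c.blocks := rfl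

theorem consBlock_bijective (n : ℕ) :
    Function.Bijective fun s : Σ k : Fin (n + 1), Composition (n - k) => consBlock s.1 s.2 := by
  constructor
  · rintro ⟨k, c⟩ ⟨k', c'⟩ h
    have hblocks := congrArg Composition.blocks h
    simp only [blocks_consBlock, List.cons.injEq, Nat.add_right_cancel_iff] at hblocks
    obtain rfl : k = k' := Fin.ext hblocks.1
    rw [Composition.ext hblocks.2]
  · rintro ⟨_ | ⟨k, bs⟩, hpos, hsum⟩
    · simp at hsum
    · have hk : 0 < k := hpos List.mem_cons_self
      rw [List.sum_cons] at hsum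
      refine ⟨⟨⟨k - 1, by omega⟩, bs, fun h => hpos (List.mem_cons_of_mem _ h), ?_⟩, ?_⟩
      · dsimp only; omega
      · exact Composition.ext (by rw [blocks_consBlock]; dsimp only; rw [Nat.sub_add_cancel hk])

/-- The sum of `φ L` over all ways to cut `l` into a list `L` of consecutive nonempty blocks. -/
def blockSum (φ : List (List α) → M) (l : List α) : M :=
  ∑ c : Composition l.length, φ (l.splitWrtComposition c)

theorem blockSum_eq_sum (φ : List (List α) → M) {l : List α} {n : ℕ} (h : l.length = n) :
    blockSum φ l = ∑ c : Composition n, φ (l.splitWrtComposition c) := by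
  subst h; rfl

theorem blockSum_nil (φ : List (List α) → M) : blockSum φ [] = φ [] := by
  have blocks_eq_nil (c : Composition 0) : c.blocks = [] :=
    List.eq_nil_of_length_eq_zero (Nat.le_zero.mp c.length_le)
  have : Subsingleton (Composition 0) :=
    ⟨fun c d => Composition.ext ((blocks_eq_nil c).trans (blocks_eq_nil d).symm)⟩
  rw [blockSum_eq_sum φ List.length_nil, Fintype.sum_subsingleton _ (Composition.ones 0)]
  rfl

theorem blockSum_cons (φ : List (List α) → M) (a : α) (l : List α) :
    blockSum φ (a :: l) = cutSum (fun u v => blockSum (fun L => φ ((a :: u) :: L)) v) l := by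
  rw [blockSum_eq_sum φ List.length_cons, ← (consBlock_bijective l.length).sum_comp,
    Fintype.sum_sigma, cutSum_eq_sum_range, ← Fin.sum_univ_eq_sum_range
      fun k => blockSum (fun L => φ ((a :: l.take k) :: L)) (l.drop k)]
  refine Fintype.sum_congr _ _ fun k => ?_
  rw [blockSum_eq_sum _ List.length_drop]
  refine Fintype.sum_congr _ _ fun c => ?_
  rw [List.splitWrtComposition, blocks_consBlock, List.splitWrtCompositionAux_cons]
  rfl

theorem blockSum_add (φ ψ : List (List α) → M) (l : List α) :
    blockSum (fun L => φ L + ψ L) l = blockSum φ l + blockSum ψ l :=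
  Finset.sum_add_distrib

theorem blockSum_zero (l : List α) : blockSum (fun _ => (0 : M)) l = 0 :=
  Finset.sum_const_zero

theorem map_blockSum (g : M →+ N) (φ : List (List α) → M) (l : List α) :
    g (blockSum φ l) = blockSum (fun L => g (φ L)) l :=
  map_sum g _ _

theorem blockSum_comm (φ : List (List α) → List (List β) → M) (l : List α) (m : List β) :
    blockSum (fun L => blockSum (φ L) m) l = blockSum (fun L' => blockSum (φ · L') l) m :=
  Finset.sum_comm

theorem blockSum_mul_blockSum {R : Type*} [NonUnitalNonAssocSemiring R] (φ ψ : List (List α) → R)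
    (l m : List α) :
    blockSum φ l * blockSum ψ m = blockSum (fun L => blockSum (fun L' => φ L * ψ L') m) l :=
  Finset.sum_mul_sum _ _ _ _

theorem blockSum_map (g : α → β) (φ : List (List β) → M) (l : List α) :
    blockSum φ (l.map g) = blockSum (fun L => φ (L.map (List.map g))) l := by
  induction hn : l.length using Nat.strong_induction_on generalizing φ l with
  | _ n ih =>
    cases l with
    | nil => simp only [List.map_nil, blockSum_nil]
    | cons a l =>
      rw [List.map_cons, blockSum_cons, blockSum_cons, cutSum_map]
      refine cutSum_congr fun u v huv => ?_
      rw [ih v.length (by simp [← hn, ← huv]) _ _ rfl]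
      simp only [List.map_cons]

theorem blockSum_cutSum (Q : List (List α) → List (List α) → M) (l : List α) :
    blockSum (fun L => cutSum Q L) l =
      cutSum (fun u v => blockSum (fun S => blockSum (fun T => Q S T) v) u) l := by
  induction hn : l.length using Nat.strong_induction_on generalizing Q l with
  | _ n ih =>
    cases l with
    | nil => simp only [blockSum_nil, cutSum]
    | cons a l =>
      have ih' (u v : List α) (huv : u ++ v = l) :
          blockSum (fun L => cutSum (fun S T => Q ((a :: u) :: S) T) L) v =
            cutSum (fun s t => blockSum (fun S => blockSum (Q ((a :: u) :: S)) t) s) v :=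
        ih v.length (by simp [← hn, ← huv]) _ _ rfl
      simp only [cutSum, blockSum_cons, blockSum_add, blockSum_nil, cutSum_add]
      rw [cutSum_congr ih', cutSum_cutSum]

end ListSums

section Multiadditive

variable {M N : Type*} [AddCommMonoid M] [AddCommGroup N]

/-- Additivity of a function on lists in each entry; on lists of a fixed length `n` this is
additivity of an `n`-ary function in each argument. -/
def IsMultiadditive (R : List M → N) : Prop :=
  ∀ s t a b, R (s ++ (a + b) :: t) = R (s ++ a :: t) + R (s ++ b :: t)

namespace IsMultiadditive

variable {R : List M → N}

theorem cons (hR : IsMultiadditive R) (a : M) : IsMultiadditive fun l => R (a :: l) :=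
  fun s => hR (a :: s)

/-- The dependence of a multiadditive function on the head of a list with tail `t`. -/
def headHom (hR : IsMultiadditive R) (t : List M) : M →+ N :=
  AddMonoidHom.mk' (fun a => R (a :: t)) (hR [] t)

theorem apply_zero_cons (hR : IsMultiadditive R) (t : List M) : R (0 :: t) = 0 :=
  map_zero (hR.headHom t)

theorem apply_blockSum_cons {α : Type*} (hR : IsMultiadditive R) (t : List M)
    (φ : List (List α) → M) (l : List α) :
    R (blockSum φ l :: t) = blockSum (fun L => R (φ L :: t)) l :=
  map_blockSum (hR.headHom t) φ l

theorem blockSum_blockSum {α : Type*} (hR : IsMultiadditive R) (θ : List (List α) → M)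
    (l : List α) :
    blockSum (fun L => blockSum (fun Λ => R (Λ.map θ)) L) l =
      blockSum (fun L => R (L.map (blockSum θ))) l := by
  induction hn : l.length using Nat.strong_induction_on generalizing R l with
  | _ n ih =>
    cases l with
    | nil => simp only [blockSum_nil, List.map_nil]
    | cons a l =>
      have ih' (b : M) (t : List α) (ht : t.length < n) :
          blockSum (fun T => blockSum (fun Λ => R (b :: Λ.map θ)) T) t =
            blockSum (fun L => R (b :: L.map (blockSum θ))) t :=
        ih t.length ht (hR.cons b) t rfl
      calc blockSum (fun L => blockSum (fun Λ => R (Λ.map θ)) L) (a :: l)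
        _ = cutSum (fun u v => cutSum (fun s t => blockSum (fun S => blockSum (fun T =>
              blockSum (fun Λ => R (θ ((a :: u) :: S) :: Λ.map θ)) T) t) s) v) l := by
          simp only [blockSum_cons, List.map_cons, blockSum_cutSum]
        _ = cutSum (fun u v => cutSum (fun s t => blockSum (fun S => blockSum (fun L =>
              R (θ ((a :: u) :: S) :: L.map (blockSum θ))) t) s) v) l := by
          refine cutSum_congr fun u v huv => cutSum_congr fun s t hst => ?_
          simp only [ih' _ t (by simp +arith [← hn, ← huv, ← hst])]
        _ = cutSum (fun w t => blockSum (fun S => blockSum (fun L =>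
              R (θ S :: L.map (blockSum θ))) t) (a :: w)) l := by
          simp only [blockSum_cons, cutSum_cutSum]
        _ = cutSum (fun w t => blockSum (fun L =>
              R (blockSum θ (a :: w) :: L.map (blockSum θ))) t) l := by
          simp only [hR.apply_blockSum_cons]
          exact cutSum_congr fun _ _ _ => blockSum_comm _ _ _
        _ = blockSum (fun L => R (L.map (blockSum θ))) (a :: l) := by
          simp only [blockSum_cons, List.map_cons]

end IsMultiadditive

end Multiadditive

namespace MSeries

section Eval

variable {B : Type*}

/-- The value of a series on a list of arguments, at the arity given by the length of the list. -/
def eval (f : MSeries B) (l : List B) : B := f l.length l.get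

theorem eval_ofFn (f : MSeries B) {n : ℕ} (x : Fin n → B) : f.eval (List.ofFn x) = f n x :=
  congrArg (fun s : Σ n, Fin n → B => f s.1 s.2) (List.equivSigmaTuple.apply_symm_apply ⟨n, x⟩)

theorem eval_eq_apply (f : MSeries B) {l : List B} {n : ℕ} {x : Fin n → B}
    (h : l = List.ofFn x) : f.eval l = f n x := by
  rw [h, eval_ofFn]

theorem eval_nil (f : MSeries B) (x : Fin 0 → B) : f.eval [] = f 0 x :=
  eval_eq_apply f List.ofFn_zero.symm

theorem ext_eval {f g : MSeries B} (h : ∀ l, f.eval l = g.eval l) : f = g := by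
  funext n x
  rw [← eval_ofFn f, ← eval_ofFn g, h]

theorem eval_set (f : MSeries B) {l : List B} {i : ℕ} (hi : i < l.length) (b : B) :
    f.eval (l.set i b) = f l.length (Function.update l.get ⟨i, hi⟩ b) := by
  refine eval_eq_apply f (List.ext_getElem (by rw [List.length_set, List.length_ofFn])
    fun j _ _ => ?_)
  simp only [List.getElem_set, List.getElem_ofFn, Function.update_apply, Fin.mk.injEq,
    List.get_eq_getElem, eq_comm]

end Eval

section RingStructure

variable {B : Type*} [Ring B]

instance : AddCommGroup (MSeries B) := inferInstanceAs (AddCommGroup (∀ n : ℕ, (Fin n → B) → B))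

instance : Module B (MSeries B) := inferInstanceAs (Module B (∀ n : ℕ, (Fin n → B) → B))

instance : Mul (MSeries B) := ⟨mul⟩

instance : One (MSeries B) := ⟨oneS⟩

theorem eval_add (f g : MSeries B) (l : List B) : (f + g).eval l = f.eval l + g.eval l := rfl

theorem eval_zero (l : List B) : (0 : MSeries B).eval l = 0 := rfl

theorem eval_sub (f g : MSeries B) (l : List B) : (f - g).eval l = f.eval l - g.eval l := rfl

theorem eval_smul (b : B) (f : MSeries B) (l : List B) : (b • f).eval l = b * f.eval l := rfl

theorem eval_one_nil : (1 : MSeries B).eval [] = 1 := rfl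

theorem eval_one_cons (a : B) (l : List B) : (1 : MSeries B).eval (a :: l) = 0 := rfl

theorem eval_idS_nil : (idS : MSeries B).eval [] = 0 := rfl

theorem eval_idS_singleton (a : B) : (idS : MSeries B).eval [a] = a := rfl

theorem eval_idS_cons_cons (a b : B) (l : List B) : (idS : MSeries B).eval (a :: b :: l) = 0 := rfl

theorem eval_mul (f g : MSeries B) (l : List B) :
    (f * g).eval l = cutSum (fun u v => f.eval u * g.eval v) l := by
  rw [cutSum_eq_sum_range, ← Fin.sum_univ_eq_sum_range
    fun k => f.eval (l.take k) * g.eval (l.drop k)]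
  change mul f g _ _ = _
  rw [mul]
  refine Finset.sum_congr rfl fun k _ => ?_
  congr 1
  · refine (eval_eq_apply f ?_).symm
    exact List.ext_get (by simp +arith [Fin.is_le k]) (by simp)
  · refine (eval_eq_apply g ?_).symm
    exact List.ext_get (by simp) (by simp)

theorem eval_mul_nil (f g : MSeries B) : (f * g).eval [] = f.eval [] * g.eval [] :=
  eval_mul f g []

instance : Ring (MSeries B) where
  __ := (inferInstance : AddCommGroup (MSeries B))
  mul_assoc f g h := ext_eval fun l => by
    simp only [eval_mul, cutSum_mul, mul_cutSum, mul_assoc, cutSum_cutSum]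
  one_mul f := ext_eval fun l => by
    rw [eval_mul, cutSum_eq_right (by simp [eval_one_cons]), eval_one_nil, one_mul]
  mul_one f := ext_eval fun l => by
    rw [eval_mul, cutSum_eq_left (by simp [eval_one_cons]), eval_one_nil, mul_one]
  left_distrib f g h := ext_eval fun l => by
    simp only [eval_mul, eval_add, mul_add, cutSum_add]
  right_distrib f g h := ext_eval fun l => by
    simp only [eval_mul, eval_add, add_mul, cutSum_add]
  zero_mul f := ext_eval fun l => by
    simp only [eval_mul, eval_zero, zero_mul, cutSum_zero]
  mul_zero f := ext_eval fun l => by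
    simp only [eval_mul, eval_zero, mul_zero, cutSum_zero]

instance : IsScalarTower B (MSeries B) (MSeries B) where
  smul_assoc b f g := ext_eval fun l => by
    simp only [smul_eq_mul, eval_mul, eval_smul, mul_cutSum, mul_assoc]

theorem eval_comp (f g : MSeries B) (l : List B) :
    (f.comp g).eval l = blockSum (fun L => f.eval (L.map g.eval)) l := by
  rw [eval, comp, blockSum]
  refine Finset.sum_congr rfl fun c _ => (eval_eq_apply f ?_).symm
  refine List.ext_getElem (by simp) fun i h _ => ?_
  have hi : i < c.length := by simpa using h
  have hsize : c.sizeUpTo (i + 1) = c.sizeUpTo i + c.blocksFun ⟨i, hi⟩ := c.sizeUpTo_succ' ⟨i, hi⟩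
  have hle := c.sizeUpTo_le (i + 1)
  rw [List.getElem_map, List.getElem_ofFn, List.getElem_splitWrtComposition]
  refine eval_eq_apply g (List.ext_getElem ?_ fun j _ _ => ?_)
  · simp only [List.length_drop, List.length_take, List.length_ofFn]
    omega
  · simp [Composition.coe_embedding]

theorem eval_comp_nil (f g : MSeries B) : (f.comp g).eval [] = f.eval [] := by
  rw [eval_comp, blockSum_nil, List.map_nil]

theorem mul_comp (f g h : MSeries B) : (f * g).comp h = f.comp h * g.comp h :=
  ext_eval fun l => by
    simp only [eval_comp, eval_mul, cutSum_map, blockSum_cutSum, blockSum_mul_blockSum]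

theorem idS_comp {p : MSeries B} (hp : p.eval [] = 0) : idS.comp p = p :=
  ext_eval fun l => by
    cases l with
    | nil => rw [eval_comp_nil, eval_idS_nil, hp]
    | cons a l =>
      rw [eval_comp, blockSum_cons, cutSum_eq_left]
      · rw [blockSum_nil, List.map_singleton, eval_idS_singleton]
      · simp only [blockSum_cons, List.map_cons, eval_idS_cons_cons, blockSum_zero, cutSum_zero,
          implies_true]

theorem blockSum_map_eval_idS {N : Type*} [AddCommGroup N] {R : List B → N}
    (hR : IsMultiadditive R) (l : List B) :
    blockSum (fun L => R (L.map idS.eval)) l = R l := by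
  induction l generalizing R with
  | nil => rw [blockSum_nil, List.map_nil]
  | cons a l ih =>
    rw [blockSum_cons, cutSum_eq_right]
    · exact ih (hR.cons a)
    · simp only [List.map_cons, eval_idS_cons_cons, hR.apply_zero_cons, blockSum_zero, implies_true]

theorem comp_idS {p : MSeries B} (hp : IsMultiadditive p.eval) : p.comp idS = p :=
  ext_eval fun l => by rw [eval_comp, blockSum_map_eval_idS hp]

theorem comp_assoc {r : MSeries B} (hr : IsMultiadditive r.eval) (q p : MSeries B) :
    (r.comp q).comp p = r.comp (q.comp p) :=
  ext_eval fun l => by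
    have eval_comp' (f g : MSeries B) : (f.comp g).eval = _ := funext (eval_comp f g)
    simp only [eval_comp', blockSum_map, ← hr.blockSum_blockSum, List.map_map, Function.comp_def]

theorem eval_idS_mul_nil (F : MSeries B) : (idS * F).eval [] = 0 := by
  rw [eval_mul_nil, eval_idS_nil, zero_mul]

theorem eval_idS_mul_cons (F : MSeries B) (a : B) (l : List B) :
    (idS * F).eval (a :: l) = a * F.eval l := by
  rw [eval_mul, cutSum, eval_idS_nil, zero_mul, zero_add, cutSum_eq_right, eval_idS_singleton]
  simp only [eval_idS_cons_cons, zero_mul, implies_true]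

theorem idS_mul_succ (F : MSeries B) {n : ℕ} (x : Fin (n + 1) → B) :
    (idS * F : MSeries B) (n + 1) x = x 0 * F n (Fin.tail x) := by
  rw [← eval_ofFn (idS * F), List.ofFn_succ, eval_idS_mul_cons, eval_ofFn F]
  rfl

theorem idS_mul_comp_idS_mul (F G : MSeries B) :
    (idS * F).comp (idS * G) = idS * (G * F.comp (idS * G)) := by
  rw [mul_comp, idS_comp (eval_idS_mul_nil G), mul_assoc]

end RingStructure

section Multilinear

variable {K B : Type u} [Field K] [Ring B] [Algebra K B]

theorem isMultSeries_one : IsMultSeries K (1 : MSeries B)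
  | 0 => ⟨MultilinearMap.constOfIsEmpty K _ 1, fun _ => rfl⟩
  | _ + 1 => ⟨0, fun _ => rfl⟩

theorem isMultSeries_idS : IsMultSeries K (idS : MSeries B)
  | 0 => ⟨0, fun _ => rfl⟩
  | 1 => ⟨MultilinearMap.ofSubsingleton K B B 0 LinearMap.id, fun _ => rfl⟩
  | _ + 2 => ⟨0, fun _ => rfl⟩

end Multilinear

end MSeries

namespace IsMultSeries

open MSeries

variable {K B : Type u} [Field K] [Ring B] [Algebra K B] {f g : MSeries B}

theorem isMultiadditive_eval (hf : IsMultSeries K f) : IsMultiadditive f.eval := by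
  intro s t a b
  have hs : s.length < (s ++ 0 :: t).length := by simp
  have eval_update (c : B) : f.eval (s ++ c :: t) =
      f _ (Function.update (s ++ 0 :: t).get ⟨s.length, hs⟩ c) := by
    rw [← eval_set f, List.set_append_right _ _ le_rfl, Nat.sub_self, List.set_cons_zero]
  obtain ⟨F, hF⟩ := hf (s ++ 0 :: t).length
  simp only [eval_update, hF, F.map_update_add]

theorem sub (hf : IsMultSeries K f) (hg : IsMultSeries K g) : IsMultSeries K (f - g) := by
  intro n
  obtain ⟨F, hF⟩ := hf n
  obtain ⟨G, hG⟩ := hg n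
  exact ⟨F - G, fun x => congrArg₂ (· - ·) (hF x) (hG x)⟩

theorem smul (b : B) (hf : IsMultSeries K f) : IsMultSeries K (b • f) := by
  intro n
  obtain ⟨F, hF⟩ := hf n
  exact ⟨(LinearMap.mulLeft K b).compMultilinearMap F, fun x => congrArg (b * ·) (hF x)⟩

theorem mul (hf : IsMultSeries K f) (hg : IsMultSeries K g) : IsMultSeries K (f * g) := by
  choose F hF using hf
  choose G hG using hg
  refine fun n => ⟨∑ k : Fin (n + 1), (LinearMap.mul' K B).compMultilinearMap
    (((F k).domCoprod (G (n - k))).domDomCongr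
      (finSumFinEquiv.trans (finCongr (Nat.add_sub_of_le (Fin.is_le k))))), fun x => ?_⟩
  change MSeries.mul f g n x = _
  rw [sum_apply, MSeries.mul]
  refine Finset.sum_congr rfl fun k _ => ?_
  rw [hF, hG]
  rfl

theorem comp (hf : IsMultSeries K f) (hg : IsMultSeries K g) : IsMultSeries K (f.comp g) := by
  -- The discrete topology makes Mathlib's composition of continuous multilinear maps available.
  let _ : TopologicalSpace B := ⊥
  have : DiscreteTopology B := ⟨rfl⟩
  choose F hF using hf
  choose G hG using hg
  let F' : FormalMultilinearSeries K B B := fun n => ⟨F n, continuous_of_discreteTopology⟩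
  let G' : FormalMultilinearSeries K B B := fun n => ⟨G n, continuous_of_discreteTopology⟩
  refine fun n => ⟨∑ c, (F'.compAlongComposition G' c).toMultilinearMap, fun x => ?_⟩
  rw [sum_apply, MSeries.comp]
  refine Finset.sum_congr rfl fun c _ => ?_
  simp only [hF, hG]
  rfl

end IsMultSeries

namespace MSeries

section FixedPoint

variable {B : Type*} [Ring B]

/-- The degree `n` part of `Φ f` depends only on the parts of `f` of degree less than `n`. -/
def IsCausal (Φ : MSeries B → MSeries B) : Prop :=
  ∀ n f g, (∀ k < n, f k = g k) → Φ f n = Φ g n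

/-- The fixed point of a causal `Φ`, built degree by degree. -/
def fixedPoint (Φ : MSeries B → MSeries B) : MSeries B
  | n => Φ (fun k => if _ : k < n then fixedPoint Φ k else 0) n

theorem IsCausal.apply_fixedPoint {Φ : MSeries B → MSeries B} (hΦ : IsCausal Φ) :
    Φ (fixedPoint Φ) = fixedPoint Φ := by
  funext n
  rw [fixedPoint]
  exact hΦ n _ _ fun k hk => by rw [dif_pos hk]

theorem mul_apply_congr {p q f g : MSeries B} {n : ℕ} (hp : p.eval [] = 0) (hq : q.eval [] = 0)
    (hpq : ∀ k ≤ n, p k = q k) (hfg : ∀ k < n, f k = g k) : (p * f) n = (q * g) n := by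
  funext x
  change mul p f n x = mul q g n x
  refine Finset.sum_congr rfl fun k _ => ?_
  rcases Nat.eq_zero_or_pos k with hk | hk
  · obtain rfl : k = 0 := Fin.ext hk
    have zero_term {p : MSeries B} (hp : p.eval [] = 0) (y : Fin 0 → B) (b : B) :
        p 0 y * b = 0 := by
      rw [← eval_nil p, hp, zero_mul]
    exact (zero_term hp _ _).trans (zero_term hq _ _).symm
  · rw [hpq k k.is_le, hfg (n - k) (by have := k.is_le; omega)]

theorem comp_apply_congr (f : MSeries B) {g h : MSeries B} {n : ℕ} (hgh : ∀ k ≤ n, g k = h k) :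
    f.comp g n = f.comp h n := by
  funext x
  refine Finset.sum_congr rfl fun c _ => ?_
  simp only [fun i => hgh _ (c.blocksFun_le i)]

theorem isCausal_comp_idS_mul (F : MSeries B) : IsCausal fun E => F.comp (idS * E) := by
  refine fun n f g hfg => comp_apply_congr F fun k hk => funext fun x => ?_
  cases k with
  | zero => rw [← eval_nil (idS * f), ← eval_nil (idS * g), eval_idS_mul_nil, eval_idS_mul_nil]
  | succ k => rw [idS_mul_succ, idS_mul_succ, hfg k hk]

/-- The equation `H E * E = 1` solved for `E` in the term `u • E` contributed by the constant term
`u` of `H E`: a fixed point `E` is a solution. -/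
def invStep (H : MSeries B → MSeries B) (u : Bˣ) (E : MSeries B) : MSeries B :=
  (↑u⁻¹ : B) • (1 - (H E - (u : B) • (1 : MSeries B)) * E)

theorem isCausal_invStep {H : MSeries B → MSeries B} (hH : IsCausal H) {u : Bˣ}
    (hu : (H 0).eval [] = u) : IsCausal (invStep H u) := by
  have eval_nil_eq_zero (E : MSeries B) : (H E - (u : B) • (1 : MSeries B)).eval [] = 0 := by
    rw [eval_sub, eval_smul, eval_one_nil, mul_one, ← hu, sub_eq_zero]
    exact congrFun (hH 0 E 0 fun k hk => absurd hk k.not_lt_zero) _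
  intro n f g hfg
  have causal_le (k : ℕ) (hk : k ≤ n) : H f k = H g k :=
    hH k f g fun j hj => hfg j (hj.trans_le hk)
  have mul_eq := mul_apply_congr (eval_nil_eq_zero f) (eval_nil_eq_zero g)
    (fun k hk => congrArg (· - ((u : B) • (1 : MSeries B)) k) (causal_le k hk)) hfg
  exact congrArg (fun a => (↑u⁻¹ : B) • ((1 : MSeries B) n - a)) mul_eq

theorem mul_fixedPoint_invStep {H : MSeries B → MSeries B} (hH : IsCausal H) {u : Bˣ}
    (hu : (H 0).eval [] = u) :
    H (fixedPoint (invStep H u)) * fixedPoint (invStep H u) = 1 := by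
  set E := fixedPoint (invStep H u)
  have invStep_E : invStep H u E = E := (isCausal_invStep hH hu).apply_fixedPoint
  have smul_E : (u : B) • E = 1 - (H E * E - (u : B) • E) := calc
    (u : B) • E = (u : B) • invStep H u E := by rw [invStep_E]
    _ = 1 - (H E * E - (u : B) • E) := by
      rw [invStep, smul_smul, Units.mul_inv, one_smul, sub_mul, smul_mul_assoc, one_mul]
  rw [← sub_add, right_eq_add, sub_eq_zero] at smul_E
  exact smul_E.symm

theorem isUnit_eval_nil_of_mul_eq_one {p q : MSeries B} (hp : IsUnit (p.eval []))
    (hpq : p * q = 1) : IsUnit (q.eval []) := by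
  obtain ⟨u, hu⟩ := hp
  rw [← Units.isUnit_units_mul u, hu, ← eval_mul_nil, hpq, eval_one_nil]
  exact isUnit_one

theorem exists_mul_eq_one {p : MSeries B} (hp : IsUnit (p.eval [])) : ∃ q, p * q = 1 := by
  obtain ⟨u, hu⟩ := hp
  exact ⟨_, mul_fixedPoint_invStep (H := fun _ => p) (fun _ _ _ _ => rfl) hu.symm⟩

theorem mul_eq_one_symm {p q : MSeries B} (hp : IsUnit (p.eval [])) (hpq : p * q = 1) :
    q * p = 1 := by
  obtain ⟨r, hqr⟩ := exists_mul_eq_one (isUnit_eval_nil_of_mul_eq_one hp hpq)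
  rwa [left_inv_eq_right_inv hpq hqr]

theorem exists_inverse {p : MSeries B} (hp : IsUnit (p.eval [])) : ∃ q, q * p = 1 ∧ p * q = 1 := by
  obtain ⟨q, hpq⟩ := exists_mul_eq_one hp
  exact ⟨q, mul_eq_one_symm hp hpq, hpq⟩

theorem eq_idS_mul_inverse {F h : MSeries B} (hF : IsUnit (F.eval []))
    (hFh : (idS * F).comp h = idS) (hhF : h.comp (idS * F) = idS) :
    ∃ E, E * F.comp h = 1 ∧ F.comp h * E = 1 ∧ h = idS * E := by
  have eval_nil_h : h.eval [] = 0 := by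
    rw [← eval_comp_nil h (idS * F), hhF, eval_idS_nil]
  have h_mul : h * F.comp h = idS := by rw [← hFh, mul_comp, idS_comp eval_nil_h]
  obtain ⟨E, E_mul, mul_E⟩ : ∃ E, E * F.comp h = 1 ∧ F.comp h * E = 1 :=
    exists_inverse (by rwa [eval_comp_nil])
  refine ⟨E, E_mul, mul_E, ?_⟩
  rw [← h_mul, mul_assoc, mul_E, mul_one]

end FixedPoint

theorem isMultSeries_fixedPoint {K B : Type u} [Field K] [Ring B] [Algebra K B]
    {Φ : MSeries B → MSeries B} (hΦ : ∀ f, IsMultSeries K f → IsMultSeries K (Φ f)) :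
    IsMultSeries K (fixedPoint Φ) := by
  intro n
  induction n using Nat.strong_induction_on with
  | _ n ih =>
    rw [fixedPoint]
    refine hΦ _ (fun k => ?_) n
    by_cases hk : k < n
    · simpa only [dif_pos hk] using ih k hk
    · exact ⟨0, fun x => by rw [dif_neg hk]; rfl⟩

end MSeries

section GI

open MSeries

variable {K B : Type u} [Field K] [Ring B] [Algebra K B]

theorem memGI_iff_exists_eq_idS_mul {f : MSeries B} :
    memGI K f ↔ ∃ F, IsMultSeries K F ∧ IsUnit (F.eval []) ∧ f = idS * F := by
  constructor
  · rintro ⟨hf, hf₀, -, hf₁, hfn⟩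
    choose f' hf' using hf
    let F : MSeries B := fun n x => f (n + 1) (Fin.cons 1 x)
    refine ⟨F, fun n => ⟨(f' (n + 1)).curryLeft 1, fun x => hf' _ _⟩, ?_, ?_⟩
    · have eval_F : F.eval [] = f 1 fun _ => 1 :=
        (eval_nil F Fin.elim0).trans (congrArg (f 1) (funext (Fin.forall_fin_one.mpr rfl)))
      rwa [eval_F]
    · funext n x
      cases n with
      | zero => rw [hf₀, ← eval_nil (idS * F), eval_idS_mul_nil]
      | succ n =>
        have update_eq : Function.update x 0 1 = Fin.cons 1 (Fin.tail x) := by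
          rw [← Fin.update_cons_zero (x 0), Fin.cons_self_tail]
        rw [idS_mul_succ, hfn, update_eq]
  · rintro ⟨F, hF, hF₀, rfl⟩
    have apply_one (b : B) : (idS * F : MSeries B) 1 (fun _ => b) = b * F.eval [] := by
      rw [idS_mul_succ, eval_nil]
    refine ⟨.mul isMultSeries_idS hF, fun x => ?_, ?_, ?_, fun n x => ?_⟩
    · rw [← eval_nil (idS * F), eval_idS_mul_nil]
    · simp only [apply_one]
      exact hF₀.unit.mulRight_bijective
    · rwa [apply_one, one_mul]
    · rw [idS_mul_succ, idS_mul_succ, Function.update_self, one_mul, Fin.tail_update_zero]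

theorem memGI_idS : memGI K (idS : MSeries B) :=
  memGI_iff_exists_eq_idS_mul.mpr ⟨1, isMultSeries_one, isUnit_one, (mul_one idS).symm⟩

theorem memGI.comp {f g : MSeries B} (hf : memGI K f) (hg : memGI K g) : memGI K (f.comp g) := by
  obtain ⟨F, hF, hF₀, rfl⟩ := memGI_iff_exists_eq_idS_mul.mp hf
  obtain ⟨G, hG, hG₀, rfl⟩ := memGI_iff_exists_eq_idS_mul.mp hg
  refine memGI_iff_exists_eq_idS_mul.mpr
    ⟨G * F.comp (idS * G), hG.mul (hF.comp hg.1), ?_, idS_mul_comp_idS_mul F G⟩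
  rw [eval_mul_nil, eval_comp_nil]
  exact hG₀.mul hF₀

theorem memGI.exists_comp_eq_idS {f : MSeries B} (hf : memGI K f) :
    ∃ h, memGI K h ∧ f.comp h = idS := by
  obtain ⟨F, hF, ⟨u, hu⟩, rfl⟩ := memGI_iff_exists_eq_idS_mul.mp hf
  set E := fixedPoint (invStep (fun E => F.comp (idS * E)) u)
  have mul_E : F.comp (idS * E) * E = 1 :=
    mul_fixedPoint_invStep (isCausal_comp_idS_mul F) (by rw [eval_comp_nil, hu])
  have hE : IsMultSeries K E := isMultSeries_fixedPoint fun E hE =>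
    have hH : IsMultSeries K (F.comp (idS * E)) := hF.comp (isMultSeries_idS.mul hE)
    .smul _ (isMultSeries_one.sub ((hH.sub (.smul _ isMultSeries_one)).mul hE))
  have isUnit_const : IsUnit ((F.comp (idS * E)).eval []) := by
    rw [eval_comp_nil, ← hu]
    exact u.isUnit
  have hE₀ : IsUnit (E.eval []) := isUnit_eval_nil_of_mul_eq_one isUnit_const mul_E
  have E_mul : E * F.comp (idS * E) = 1 := mul_eq_one_symm isUnit_const mul_E
  refine ⟨idS * E, memGI_iff_exists_eq_idS_mul.mpr ⟨E, hE, hE₀, rfl⟩, ?_⟩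
  rw [idS_mul_comp_idS_mul, E_mul, mul_one]

theorem memGI.exists_comp_inverse {f : MSeries B} (hf : memGI K f) :
    ∃ h, memGI K h ∧ f.comp h = idS ∧ h.comp f = idS := by
  obtain ⟨h, hh, hfh⟩ := hf.exists_comp_eq_idS
  obtain ⟨f', hf', hhf'⟩ := hh.exists_comp_eq_idS
  have f'_eq : f' = f := calc
    f' = (f.comp h).comp f' := by rw [hfh, idS_comp (hf'.2.1 _)]
    _ = f.comp (h.comp f') := comp_assoc hf.1.isMultiadditive_eval h f'
    _ = f := by rw [hhf', comp_idS hf.1.isMultiadditive_eval]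
  exact ⟨h, hh, hfh, f'_eq ▸ hhf'⟩

theorem GI_group_general :
    memGI K (idS : MSeries B) ∧
    (∀ f g : MSeries B, memGI K f → memGI K g → memGI K (f.comp g)) ∧
    (∀ f : MSeries B, memGI K f →
      ∃ h : MSeries B, memGI K h ∧ f.comp h = idS ∧ h.comp f = idS) ∧
    (∀ F G : MSeries B, (idS * F).comp (idS * G) = idS * (G * F.comp (idS * G))) ∧
    (∀ F h : MSeries B, IsUnit (F 0 fun i => i.elim0) →
      (idS * F).comp h = idS → h.comp (idS * F) = idS →
      ∃ E : MSeries B, E * F.comp h = 1 ∧ F.comp h * E = 1 ∧ h = idS * E) :=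
  ⟨memGI_idS, fun _ _ => memGI.comp, fun _ => memGI.exists_comp_inverse, idS_mul_comp_idS_mul,
    fun F _ hF => eq_idS_mul_inverse (by rwa [eval_nil F])⟩

end GI

open MSeries in
/-- `G_B^I` is a group under composition; in particular `(I·F) ∘ (I·G) = I·(G·(F∘(I·G)))`
and the compositional inverse of `f = I·F` is `f^{∘-1} = I·(F ∘ f^{∘-1})⁻¹`. -/
theorem GI_group {K B : Type u} [Field K] [CharZero K] [Ring B] [Algebra K B] :
    memGI K (idS : MSeries B) ∧
    (∀ f g : MSeries B, memGI K f → memGI K g → memGI K (f.comp g)) ∧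
    (∀ f : MSeries B, memGI K f →
      ∃ h : MSeries B, memGI K h ∧ f.comp h = idS ∧ h.comp f = idS) ∧
    (∀ F G : MSeries B, IsMultSeries K F → IsMultSeries K G →
      IsUnit (F 0 fun i => i.elim0) → IsUnit (G 0 fun i => i.elim0) →
      (idS.mul F).comp (idS.mul G) = idS.mul (G.mul (F.comp (idS.mul G)))) ∧
    (∀ F h : MSeries B, IsMultSeries K F → IsUnit (F 0 fun i => i.elim0) →
      (idS.mul F).comp h = idS → h.comp (idS.mul F) = idS →
      ∃ E : MSeries B, E.mul (F.comp h) = oneS ∧ (F.comp h).mul E = oneS ∧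
        h = idS.mul E) := by
  obtain ⟨idS_mem, comp_mem, inverse_mem, comp_eq, inverse_eq⟩ := GI_group_general (K := K) (B := B)
  exact ⟨idS_mem, comp_mem, inverse_mem, fun F G _ _ _ _ => comp_eq F G,
    fun F h _ => inverse_eq F h⟩
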